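/- For every nonnegative integer n and complex number x: sum over k from 0 to n of ((3x)_k (1-3x)_k (-n)_k)/(k! (1/2)_k (-1-3n)_k) * (3/4)^k equals 3x * ((1+x)_n (1-x)_n)/((2/3)_n (4/3)_n) + (1-3x) * ((2/3+x)_n (4/3-x)_n)/((2/3)_n (4/3)_n). -/

import Mathlib

/-- Pochhammer symbol (rising factorial) `(a)_k`. -/
noncomputable def poch (a : ℂ) (k : ℕ) : ℂ := ∏ j ∈ Finset.range k, (a + j)

/-!
Write `U x` for the sum `∑ k, (1+3x)_k (1-3x)_k (-n)_k / (k! (3/2)_k (-1-3n)_k) (3/4)^k`. Since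
`a (a+1)_k = (a+k) (a)_k` and `(3x+k) + (1-3x+k) = 2 (1/2+k)`, the sum to be evaluated is, term by
term, `3x U(x) + (1-3x) U(1/3-x)`. So it suffices to show that
`U x = (1+x)_n (1-x)_n / ((2/3)_n (4/3)_n)`, and this follows by induction on `n`: the first-order
recurrence that the right-hand side satisfies holds for the summand of `U` up to a difference
which telescopes to zero.
-/

theorem poch_succ (a : ℂ) (k : ℕ) : poch a (k + 1) = poch a k * (a + k) :=
  Finset.prod_range_succ _ _

theorem mul_poch_add_one (a : ℂ) (k : ℕ) : a * poch (a + 1) k = (a + k) * poch a k := by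
  rw [mul_comm (a + k), ← poch_succ]
  simp only [poch, Finset.prod_range_succ', Nat.cast_zero, add_zero, Nat.cast_succ, mul_comm _ a,
    add_assoc, add_comm (1 : ℂ)]

theorem poch_ne_zero_iff {a : ℂ} {k : ℕ} : poch a k ≠ 0 ↔ ∀ j < k, a + j ≠ 0 := by
  simp [poch, Finset.prod_ne_zero_iff]

theorem poch_ne_zero_of_re_pos {a : ℂ} (ha : 0 < a.re) (k : ℕ) : poch a k ≠ 0 :=
  poch_ne_zero_iff.mpr fun j _ h => by
    have hre : a.re + j = 0 := by simpa using congrArg Complex.re h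
    linarith [j.cast_nonneg (α := ℝ)]

theorem poch_neg_natCast_ne_zero {m k : ℕ} (h : k ≤ m) : poch (-(m : ℂ)) k ≠ 0 :=
  poch_ne_zero_iff.mpr fun j hj => by
    rw [neg_add_eq_sub, sub_ne_zero]
    exact_mod_cast (hj.trans_le h).ne

theorem poch_neg_natCast_eq_zero {m k : ℕ} (h : m < k) : poch (-(m : ℂ)) k = 0 :=
  Finset.prod_eq_zero (Finset.mem_range.mpr h) (by simp)

/-- The `k`-th term `(a)_k (b)_k (c)_k / (k! (d)_k (e)_k) z^k` of the hypergeometric series `₃F₂`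
with upper parameters `a, b, c`, lower parameters `d, e` and argument `z`. -/
noncomputable def hypTerm (a b c d e z : ℂ) (k : ℕ) : ℂ :=
  (poch a k * poch b k * poch c k) / ((Nat.factorial k : ℂ) * poch d k * poch e k) * z ^ k

section HypTerm

variable (a b c d e z : ℂ) (k : ℕ)

theorem hypTerm_swap_upper_left : hypTerm a b c d e z k = hypTerm b a c d e z k := by
  rw [hypTerm, hypTerm, mul_comm (poch a k)]

theorem hypTerm_rotate_upper : hypTerm a b c d e z k = hypTerm c a b d e z k := by
  rw [hypTerm, hypTerm, mul_comm _ (poch c k), mul_assoc (poch c k)]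

theorem hypTerm_swap_lower : hypTerm a b c d e z k = hypTerm a b c e d z k := by
  rw [hypTerm, hypTerm, mul_right_comm _ (poch d k)]

theorem mul_hypTerm_add_one_upper_left :
    a * hypTerm (a + 1) b c d e z k = (a + k) * hypTerm a b c d e z k := by
  unfold hypTerm
  linear_combination (poch b k * poch c k / (k.factorial * poch d k * poch e k) * z ^ k) *
    mul_poch_add_one a k

theorem mul_hypTerm_add_one_upper_right :
    c * hypTerm a b (c + 1) d e z k = (c + k) * hypTerm a b c d e z k := by
  simpa only [← hypTerm_rotate_upper] using mul_hypTerm_add_one_upper_left c a b d e z k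

variable {e k} in
theorem mul_hypTerm_eq_add_one_lower_right (he : poch e (k + 1) ≠ 0) :
    e * hypTerm a b c d e z k = (e + k) * hypTerm a b c d (e + 1) z k := by
  rw [poch_succ] at he
  have he₁ : e * poch (e + 1) k ≠ 0 := by rwa [mul_poch_add_one, mul_comm]
  have hdiv : e / poch e k = (e + k) / poch (e + 1) k := by
    rw [div_eq_div_iff (left_ne_zero_of_mul he) (right_ne_zero_of_mul he₁), mul_poch_add_one]
  unfold hypTerm
  linear_combination
    (poch a k * poch b k * poch c k / (k.factorial * poch d k) * z ^ k) * hdiv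

variable {e k} in
theorem mul_hypTerm_eq_add_three_lower_right (he : poch e (k + 3) ≠ 0) :
    e * (e + 1) * (e + 2) * hypTerm a b c d e z k =
      (e + k) * (e + 1 + k) * (e + 2 + k) * hypTerm a b c d (e + 3) z k := by
  rw [poch_ne_zero_iff] at he
  have he₀ := mul_hypTerm_eq_add_one_lower_right a b c d z (e := e) (k := k) <|
    poch_ne_zero_iff.mpr fun j hj => he j (by omega)
  have he₁ := mul_hypTerm_eq_add_one_lower_right a b c d z (e := e + 1) (k := k) <|
    poch_ne_zero_iff.mpr fun j hj => by
      simpa [add_assoc, add_comm, add_left_comm] using he (j + 1) (by omega)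
  have he₂ := mul_hypTerm_eq_add_one_lower_right a b c d z (e := e + 2) (k := k) <|
    poch_ne_zero_iff.mpr fun j hj => by
      simpa [add_assoc, add_comm, add_left_comm] using he (j + 2) (by omega)
  rw [show e + 1 + 1 = e + 2 by ring] at he₁
  rw [show e + 2 + 1 = e + 3 by ring] at he₂
  linear_combination (e + 1) * (e + 2) * he₀ + (e + k) * (e + 2) * he₁ +
    (e + k) * (e + 1 + k) * he₂

theorem hypTerm_succ :
    hypTerm a b c d e z (k + 1) = hypTerm a b c d e z k *
      ((a + k) * (b + k) * (c + k) * z / ((k + 1) * (d + k) * (e + k))) := by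
  simp only [hypTerm, poch_succ, Nat.factorial_succ, Nat.cast_mul, Nat.cast_succ, pow_succ,
    div_eq_mul_inv, mul_inv]
  ring

variable {a b d k} in
theorem two_mul_hypTerm_of_add_eq_two_mul (h : a + b = 2 * d) (hd : poch d (k + 1) ≠ 0) :
    2 * d * hypTerm a b c d e z k =
      a * hypTerm (a + 1) b c (d + 1) e z k + b * hypTerm a (b + 1) c (d + 1) e z k := by
  have ha := mul_hypTerm_add_one_upper_left a b c (d + 1) e z k
  have hb := mul_hypTerm_add_one_upper_left b a c (d + 1) e z k
  have hd' := mul_hypTerm_eq_add_one_lower_right a b c e z hd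
  rw [hypTerm_swap_upper_left (b + 1), hypTerm_swap_upper_left b] at hb
  rw [hypTerm_swap_lower, hypTerm_swap_lower _ _ _ e] at hd'
  linear_combination 2 * hd' - ha - hb - hypTerm a b c (d + 1) e z k * h

end HypTerm

/-- The summand of the sum `U x` of the header, with `n` replaced by a complex number `N` so that
polynomial identities in `n` apply to it without casts. -/
noncomputable def gosperTerm (N x : ℂ) (k : ℕ) : ℂ :=
  hypTerm (1 + 3 * x) (1 - 3 * x) (-N) (3 / 2) (-1 - 3 * N) (3 / 4) k

/-- A common hypergeometric term of which `gosperTerm N` and `gosperTerm (N + 1)` are multiples by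
polynomials in `k`: it has the upper parameter of the latter and the lower parameter of the
former. -/
noncomputable def gosperKernel (N x : ℂ) (k : ℕ) : ℂ :=
  hypTerm (1 + 3 * x) (1 - 3 * x) (-(N + 1)) (3 / 2) (-1 - 3 * N) (3 / 4) k

theorem mul_gosperTerm_eq_gosperKernel (N x : ℂ) (k : ℕ) :
    (N + 1) * gosperTerm N x k = (N + 1 - k) * gosperKernel N x k := by
  have h := mul_hypTerm_add_one_upper_right (1 + 3 * x) (1 - 3 * x) (-(N + 1)) (3 / 2) (-1 - 3 * N)
    (3 / 4) k
  rw [show -(N + 1) + 1 = -N by ring] at h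
  unfold gosperTerm gosperKernel
  linear_combination -h

theorem mul_gosperTerm_add_one_eq_gosperKernel {N : ℂ} (x : ℂ) {k : ℕ}
    (h : poch (-1 - 3 * (N + 1)) (k + 3) ≠ 0) :
    (3 * N + 4) * (3 * N + 3) * (3 * N + 2) * gosperTerm (N + 1) x k =
      (3 * N + 4 - k) * (3 * N + 3 - k) * (3 * N + 2 - k) * gosperKernel N x k := by
  have h₃ := mul_hypTerm_eq_add_three_lower_right (1 + 3 * x) (1 - 3 * x) (-(N + 1)) (3 / 2)
    (3 / 4) h
  rw [show -1 - 3 * (N + 1) + 3 = -1 - 3 * N by ring] at h₃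
  unfold gosperTerm gosperKernel
  linear_combination -h₃

theorem mul_gosperTerm_sub_eq_gosperKernel {N : ℂ} (x : ℂ) {k : ℕ}
    (h : poch (-1 - 3 * (N + 1)) (k + 3) ≠ 0) :
    27 * (N + 1) * ((N + 2 / 3) * (N + 4 / 3) * gosperTerm (N + 1) x k
        - ((N + 1) ^ 2 - x ^ 2) * gosperTerm N x k) =
      ((3 * N + 4 - k) * (3 * N + 3 - k) * (3 * N + 2 - k)
        - 27 * ((N + 1) ^ 2 - x ^ 2) * (N + 1 - k)) * gosperKernel N x k := by
  linear_combination mul_gosperTerm_add_one_eq_gosperKernel x h -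
    27 * ((N + 1) ^ 2 - x ^ 2) * mul_gosperTerm_eq_gosperKernel N x k

theorem gosperKernel_succ {N : ℂ} (x : ℂ) {k : ℕ} (h : -1 - 3 * N + k ≠ 0) :
    2 * (k + 1) * (2 * k + 3) * (k - 1 - 3 * N) * gosperKernel N x (k + 1) =
      3 * ((k + 1) ^ 2 - 9 * x ^ 2) * (k - N - 1) * gosperKernel N x k := by
  have hhalf : (3 / 2 + k : ℂ) ≠ 0 :=
    poch_ne_zero_iff.mp (poch_ne_zero_of_re_pos (by norm_num) (k + 1)) k k.lt_succ_self
  have hk : (k + 1 : ℂ) ≠ 0 := k.cast_add_one_ne_zero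
  have hden : (k + 1) * (3 / 2 + k) * (-1 - 3 * N + k) ≠ 0 :=
    mul_ne_zero (mul_ne_zero hk hhalf) h
  have hratio := hypTerm_succ (1 + 3 * x) (1 - 3 * x) (-(N + 1)) (3 / 2) (-1 - 3 * N) (3 / 4) k
  rw [mul_div_assoc', eq_div_iff hden] at hratio
  unfold gosperKernel
  linear_combination 4 * hratio

-- With `G k = 2 k (2 k + 1) (k - 2 - 3 N) * gosperKernel N x k`, the summand is `G (k + 1) - G k`.
-- The sum `G (j + 1)` is expressed through `gosperKernel N x j`, as the denominator of
-- `gosperKernel N x (j + 1)` may vanish.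
theorem sum_mul_gosperKernel {N : ℂ} (x : ℂ) {j : ℕ} (h : poch (-1 - 3 * N) j ≠ 0) :
    ∑ k ∈ Finset.range (j + 1),
      ((3 * N + 4 - k) * (3 * N + 3 - k) * (3 * N + 2 - k)
        - 27 * ((N + 1) ^ 2 - x ^ 2) * (N + 1 - k)) * gosperKernel N x k =
      3 * ((j + 1) ^ 2 - 9 * x ^ 2) * (j - N - 1) * gosperKernel N x j := by
  induction j with
  | zero =>
    simp only [zero_add, Finset.sum_range_one, Nat.cast_zero]
    ring
  | succ j ih =>
    rw [poch_succ] at h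
    rw [Finset.sum_range_succ, ih (left_ne_zero_of_mul h)]
    push_cast
    linear_combination -gosperKernel_succ x (right_ne_zero_of_mul h)

theorem sum_gosperTerm_recurrence (n : ℕ) (x : ℂ) :
    (n + 2 / 3) * (n + 4 / 3) * ∑ k ∈ Finset.range (n + 2), gosperTerm (n + 1 : ℕ) x k =
      ((n + 1) ^ 2 - x ^ 2) * ∑ k ∈ Finset.range (n + 1), gosperTerm n x k := by
  have hden (m k : ℕ) (hk : k ≤ 1 + 3 * m) : poch (-1 - 3 * (m : ℂ)) k ≠ 0 := by
    convert poch_neg_natCast_ne_zero hk using 2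
    push_cast
    ring
  have hlast : gosperTerm n x (n + 1) = 0 := by
    simp [gosperTerm, hypTerm, poch_neg_natCast_eq_zero n.lt_succ_self]
  have htel := sum_mul_gosperKernel x (hden n (n + 1) (by omega))
  rw [show ((n + 1 : ℕ) - n - 1 : ℂ) = 0 by push_cast; ring, mul_zero, zero_mul] at htel
  have hzero : 27 * (n + 1) *
      ((n + 2 / 3) * (n + 4 / 3) * ∑ k ∈ Finset.range (n + 2), gosperTerm (n + 1) x k
        - ((n + 1) ^ 2 - x ^ 2) * ∑ k ∈ Finset.range (n + 2), gosperTerm n x k) = 0 := by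
    rw [← htel, Finset.mul_sum, Finset.mul_sum, ← Finset.sum_sub_distrib, Finset.mul_sum]
    refine Finset.sum_congr rfl fun k hk => mul_gosperTerm_sub_eq_gosperKernel x ?_
    have hk : k < n + 2 := Finset.mem_range.mp hk
    exact_mod_cast hden (n + 1) (k + 3) (by omega)
  have hn : (27 * (n + 1) : ℂ) ≠ 0 := mul_ne_zero (by norm_num) n.cast_add_one_ne_zero
  rw [Finset.sum_range_succ (gosperTerm n x), hlast, add_zero] at hzero
  rw [Nat.cast_succ]
  exact sub_eq_zero.mp ((mul_eq_zero.mp hzero).resolve_left hn)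

theorem sum_gosperTerm (n : ℕ) (x : ℂ) :
    ∑ k ∈ Finset.range (n + 1), gosperTerm n x k =
      (poch (1 + x) n * poch (1 - x) n) / (poch (2 / 3) n * poch (4 / 3) n) := by
  have h₂ (k : ℕ) : poch (2 / 3) k ≠ 0 := poch_ne_zero_of_re_pos (by norm_num) k
  have h₄ (k : ℕ) : poch (4 / 3) k ≠ 0 := poch_ne_zero_of_re_pos (by norm_num) k
  induction n with
  | zero => simp [gosperTerm, hypTerm, poch]
  | succ n ih =>
    have hrec := sum_gosperTerm_recurrence n x
    rw [ih, mul_div_assoc', eq_div_iff (mul_ne_zero (h₂ n) (h₄ n))] at hrec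
    rw [eq_div_iff (mul_ne_zero (h₂ (n + 1)) (h₄ (n + 1)))]
    simp only [poch_succ]
    linear_combination hrec

theorem hypTerm_eq_gosperTerm_add (n x : ℂ) (k : ℕ) :
    hypTerm (3 * x) (1 - 3 * x) (-n) (1 / 2) (-1 - 3 * n) (3 / 4) k =
      3 * x * gosperTerm n x k + (1 - 3 * x) * gosperTerm n (1 / 3 - x) k := by
  have h := two_mul_hypTerm_of_add_eq_two_mul (-n) (-1 - 3 * n) (3 / 4)
    (show 3 * x + (1 - 3 * x) = 2 * (1 / 2) by ring)
    (poch_ne_zero_of_re_pos (by norm_num) (k + 1))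
  rw [hypTerm_swap_upper_left (3 * x) (1 - 3 * x + 1)] at h
  unfold gosperTerm
  convert h using 3 <;> ring_nf

theorem gosper_second_variant_ell_one (n : ℕ) (x : ℂ) :
    ∑ k ∈ Finset.range (n+1),
      (poch (3*x) k * poch (1 - 3*x) k * poch (-(n : ℂ)) k) /
        ((Nat.factorial k : ℂ) * poch (1/2) k * poch (-1 - 3*n : ℂ) k) * (3/4 : ℂ)^k
      = 3*x * ((poch (1 + x) n * poch (1 - x) n) / (poch (2/3) n * poch (4/3) n))
        + (1 - 3*x) *
            ((poch (2/3 + x) n * poch (4/3 - x) n) / (poch (2/3) n * poch (4/3) n)) := by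
  calc
    _ = ∑ k ∈ Finset.range (n + 1),
          (3 * x * gosperTerm n x k + (1 - 3 * x) * gosperTerm n (1 / 3 - x) k) :=
      Finset.sum_congr rfl fun k _ => hypTerm_eq_gosperTerm_add n x k
    _ = 3 * x * ((poch (1 + x) n * poch (1 - x) n) / (poch (2 / 3) n * poch (4 / 3) n))
          + (1 - 3 * x) * ((poch (1 + (1 / 3 - x)) n * poch (1 - (1 / 3 - x)) n) /
            (poch (2 / 3) n * poch (4 / 3) n)) := by
      rw [Finset.sum_add_distrib, ← Finset.mul_sum, ← Finset.mul_sum, sum_gosperTerm,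
        sum_gosperTerm]
    _ = _ := by
      rw [show 1 + (1 / 3 - x) = 4 / 3 - x by ring, show 1 - (1 / 3 - x) = 2 / 3 + x by ring,
        mul_comm (poch (4 / 3 - x) n)]
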